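/- arXiv:1902.09588 — 3 statements merged into one kernel-verified Lean document; each statement's English description precedes it below -/
import Mathlib

section
/- Let γ > 0, δ > 0 and let β be a real number satisfying either β < 0 or 0 < β < 4 γ^{1/4} δ^{3/4}. Define φ(k) = γ/k − β k|k| + δ k³ for k ≠ 0. Then for every k ≠ 0 one has |φ''(k)| ≥ −2β + 8 γ^{1/4} δ^{3/4}. -/
/-!
On each half-line `φ` is `γ / k - β s k ^ 2 + δ k ^ 3` with `s = sign k`, so that
`φ'' k = 2 γ / k ^ 3 - 2 β s + 6 δ k` and `s φ'' k = 2 γ / |k| ^ 3 + 6 δ |k| - 2 β`.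
The weighted AM-GM inequality for `2 γ / |k| ^ 3` and three copies of `2 δ |k|` bounds this below by
`8 γ ^ (1/4) δ ^ (3/4) - 2 β`, and `|φ'' k| ≥ s φ'' k`. With `a = γ ^ (1/4)` and
`d = δ ^ (1/4)`, AM-GM becomes the polynomial inequality `4 x y ^ 3 ≤ x ^ 4 + 3 y ^ 4` at
`x = a`, `y = d |k|`.
-/

open Real

lemma four_mul_le_pow_four_add (x y : ℝ) : 4 * (x * y ^ 3) ≤ x ^ 4 + 3 * y ^ 4 := by
  -- the difference factors as `(x - y) ^ 2 * ((x + y) ^ 2 + 2 * y ^ 2)`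
  have h : 0 ≤ (x - y) ^ 2 * ((x + y) ^ 2 + 2 * y ^ 2) := by positivity
  nlinarith [h]

lemma amgm_bound {γ δ m : ℝ} (hγ : 0 < γ) (hδ : 0 < δ) (hm : 0 < m) :
    8 * γ ^ ((1 : ℝ)/4) * δ ^ ((3 : ℝ)/4) ≤ 2 * γ / m ^ 3 + 6 * δ * m := by
  have ha : (γ ^ ((1 : ℝ)/4)) ^ 4 = γ := by
    rw [← rpow_natCast, ← rpow_mul hγ.le]; norm_num
  have hd : (δ ^ ((1 : ℝ)/4)) ^ 4 = δ := by
    rw [← rpow_natCast, ← rpow_mul hδ.le]; norm_num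
  have hd3 : δ ^ ((3 : ℝ)/4) = (δ ^ ((1 : ℝ)/4)) ^ 3 := by
    rw [← rpow_natCast, ← rpow_mul hδ.le]; norm_num
  rw [hd3]
  generalize γ ^ ((1 : ℝ)/4) = a at *
  generalize δ ^ ((1 : ℝ)/4) = d at *
  subst ha hd
  have h := four_mul_le_pow_four_add a (d * m)
  have e : 2 * a ^ 4 / m ^ 3 + 6 * d ^ 4 * m = 2 * (a ^ 4 + 3 * (d * m) ^ 4) / m ^ 3 := by
    field_simp
    ring
  rw [e, le_div_iff₀ (by positivity)]
  nlinarith [h]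

/-- The second derivative of `φ` on an open set avoiding `0` where `φ` is given by the formula with
`s * x` in place of `|x|`; used on each half-line with `s` its sign. -/
lemma deriv_deriv_eq {γ δ β s : ℝ} {φ : ℝ → ℝ} {U : Set ℝ} (hU : IsOpen U)
    (h0 : ∀ x ∈ U, x ≠ 0)
    (hφ : ∀ x ∈ U, φ x = γ * x⁻¹ - β * s * x ^ 2 + δ * x ^ 3) {k : ℝ} (hk : k ∈ U) :
    deriv (deriv φ) k = 2 * γ / k ^ 3 - 2 * β * s + 6 * δ * k := by
  have h1 : ∀ x ∈ U, deriv φ x = -γ * (x ^ 2)⁻¹ - 2 * β * s * x + 3 * δ * x ^ 2 := by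
    intro x hx
    have e : φ =ᶠ[nhds x] fun y => γ * y⁻¹ - β * s * y ^ 2 + δ * y ^ 3 :=
      Filter.eventually_of_mem (hU.mem_nhds hx) hφ
    rw [e.deriv_eq]
    have h := (((hasDerivAt_inv (h0 x hx)).const_mul γ).sub
      ((hasDerivAt_pow 2 x).const_mul (β * s))).add ((hasDerivAt_pow 3 x).const_mul δ)
    refine (h.congr_deriv ?_).deriv
    norm_num
    ring
  have e : deriv φ =ᶠ[nhds k] fun y => -γ * (y ^ 2)⁻¹ - 2 * β * s * y + 3 * δ * y ^ 2 :=
    Filter.eventually_of_mem (hU.mem_nhds hk) h1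
  rw [e.deriv_eq]
  have hk0 := h0 k hk
  have h := ((((hasDerivAt_pow 2 k).fun_inv (pow_ne_zero 2 hk0)).const_mul (-γ)).sub
    ((hasDerivAt_id k).const_mul (2 * β * s))).add ((hasDerivAt_pow 2 k).const_mul (3 * δ))
  refine (h.congr_deriv ?_).deriv
  norm_num
  field_simp
  ring

/-- Let `γ > 0`, `δ > 0` and let `β` satisfy either `β < 0` or
`0 < β < 4 γ^(1/4) δ^(3/4)`. Define `φ k = γ/k − β k|k| + δ k³`. Then for every
`k ≠ 0`, `|φ''(k)| ≥ −2β + 8 γ^(1/4) δ^(3/4)`. -/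
theorem stmt_0 (γ δ β : ℝ) (hγ : 0 < γ) (hδ : 0 < δ)
    (hβ : β < 0 ∨ (0 < β ∧ β < 4 * γ ^ ((1 : ℝ)/4) * δ ^ ((3 : ℝ)/4)))
    (φ : ℝ → ℝ) (hφ : ∀ k : ℝ, k ≠ 0 → φ k = γ / k - β * k * |k| + δ * k ^ 3) :
    ∀ k : ℝ, k ≠ 0 →
      |deriv (deriv φ) k| ≥ -2 * β + 8 * γ ^ ((1 : ℝ)/4) * δ ^ ((3 : ℝ)/4) := by
  intro k hk
  rcases lt_or_gt_of_ne hk with hneg | hpos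
  · have h := deriv_deriv_eq (γ := γ) (δ := δ) (β := β) (s := -1) (φ := φ) isOpen_Iio
      (fun x (hx : x < 0) => hx.ne)
      (fun x (hx : x < 0) => by rw [hφ x hx.ne, abs_of_neg hx]; ring) hneg
    have hb := amgm_bound hγ hδ (neg_pos.mpr hneg)
    have e : 2 * γ / (-k) ^ 3 = -(2 * γ / k ^ 3) := by
      rw [Odd.neg_pow (by decide), div_neg]
    rw [e] at hb
    rw [h]
    refine le_trans ?_ (neg_le_abs _)
    linarith
  · have h := deriv_deriv_eq (γ := γ) (δ := δ) (β := β) (s := 1) (φ := φ) isOpen_Ioi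
      (fun x (hx : 0 < x) => hx.ne')
      (fun x (hx : 0 < x) => by rw [hφ x hx.ne', abs_of_pos hx]; ring) hpos
    have hb := amgm_bound hγ hδ hpos
    rw [h]
    refine le_trans ?_ (le_abs_self _)
    linarith
end

section
/- Let γ > 0, δ > 0, and let β, α, c_s ∈ ℝ satisfy one of the following conditions: (i) β < 0 and c_s − α < 0; (ii) β < 0 and 0 < c_s − α < 2√(γδ); (iii) β > 0 and c_s − α ≤ −β²/(4δ); (iv) β > 0, 4δ − β > 0, β³ < γ(4δ − β)², and 0 < c_s − α < z₊, where z₊ = ½·(−β(1 + β/(4δ)) + (4δ − β)·√(γ/δ + (β/(4δ))²)). Then there exists c₀ > 0 such that for all ξ ≠ 0: −(c_s − α) − β|ξ| + γ/ξ² + δξ² ≥ c₀·(|ξ| + ξ² + 1/ξ²). -/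
open Real

/-!
With `x = |ξ| > 0` and `c = c_s - α`, the symbol satisfies `x² Q = δx⁴ - βx³ - cx² + γ`.
Coercivity follows once this quartic is bounded below by some `η > 0` (`coercive_of_quartic`):
then `Q ≥ η / x²`, while `Q ≥ (δ/4) x² - K / x²` for some constant `K` by Young's inequality,
and a convex combination of the two bounds controls `x² + 1/x²`, hence also `x`.

In cases (i) and (iii) one may take `η = γ`, and in case (ii) `η = γ - c²/(4δ)`. In case (iv),
`z₊` is the positive root in `c` of `(4δc + β²)(c + β) = γ(4δ - β)²`, so the hypothesis says
`(4δc + β²)(c + β) < γ(4δ - β)²`, and it remains to prove (`quartic_bound`)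
`(4δ - β)² x² (c + βx - δx²) ≤ (4δc + β²)(c + β)` for `x > 0` and `c ≥ 0`.
The difference of the two sides is a quadratic in `c` whose discriminant is
`(4δ - β)² β (x - 1)² (β(x + 1)² - 8δx²)`. If this is nonpositive the inequality is immediate;
otherwise the linear coefficient is nonnegative and the value at `c = 0` is nonnegative.
-/

/-- A uniform positive lower bound for `x² Q(x)` upgrades to coercivity of `Q`. -/
lemma coercive_of_quartic (γ δ β c η : ℝ) (hγ : 0 < γ) (hδ : 0 < δ) (hη : 0 < η)
    (h : ∀ x : ℝ, 0 < x → η ≤ δ * x ^ 4 - β * x ^ 3 - c * x ^ 2 + γ) :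
    ∃ c₀ : ℝ, 0 < c₀ ∧ ∀ ξ : ℝ, ξ ≠ 0 →
      -c - β * |ξ| + γ / ξ ^ 2 + δ * ξ ^ 2 ≥ c₀ * (|ξ| + ξ ^ 2 + 1 / ξ ^ 2) := by
  obtain ⟨M, hM⟩ : ∃ M : ℝ, M = β ^ 2 / (2 * δ) + c := ⟨_, rfl⟩
  obtain ⟨K, hK⟩ : ∃ K : ℝ, K = M ^ 2 / δ := ⟨_, rfl⟩
  have hK0 : 0 ≤ K := by rw [hK]; positivity
  -- `t` is the weight of the convex combination, chosen so that `t (K + η) = η / 2`.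
  obtain ⟨t, ht⟩ : ∃ t : ℝ, t = η / (2 * (K + η)) := ⟨_, rfl⟩
  have ht0 : 0 < t := by rw [ht]; positivity
  have htK : t * (K + η) = η / 2 := by rw [ht]; field_simp
  have ht1 : t ≤ 1 := by nlinarith
  obtain ⟨m, hm⟩ : ∃ m : ℝ, m = min (t * δ / 4) (η / 2) := ⟨_, rfl⟩
  have hm0 : 0 < m := by rw [hm]; exact lt_min (by positivity) (by positivity)
  have hm1 : m ≤ t * δ / 4 := hm ▸ min_le_left _ _
  have hm2 : m ≤ η / 2 := hm ▸ min_le_right _ _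
  refine ⟨m / 3, by positivity, fun ξ hξ => ?_⟩
  have hx : 0 < |ξ| := abs_pos.mpr hξ
  rw [← sq_abs ξ]
  generalize |ξ| = x at hx
  have hq := h x hx
  -- Young's inequality, multiplied by `x²`
  have hyoung : δ / 4 * x ^ 4 - K ≤ δ * x ^ 4 - β * x ^ 3 - c * x ^ 2 + γ := by
    have e : δ * x ^ 4 - β * x ^ 3 - c * x ^ 2 - (δ / 4 * x ^ 4 - K)
        = x ^ 2 * (δ * x - β) ^ 2 / (2 * δ) + (δ * x ^ 2 / 2 - M) ^ 2 / δ := by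
      rw [hK, show c = M - β ^ 2 / (2 * δ) by rw [hM]; ring]
      field_simp
      ring
    have : 0 ≤ x ^ 2 * (δ * x - β) ^ 2 / (2 * δ) + (δ * x ^ 2 / 2 - M) ^ 2 / δ := by positivity
    linarith
  have hcomb : m * (x ^ 4 + 1) ≤ δ * x ^ 4 - β * x ^ 3 - c * x ^ 2 + γ := by
    have h1 := mul_le_mul_of_nonneg_left hyoung ht0.le
    have h2 := mul_le_mul_of_nonneg_left hq (sub_nonneg.mpr ht1)
    have h3 := mul_le_mul_of_nonneg_right hm1 (by positivity : 0 ≤ x ^ 4)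
    nlinarith
  have hx3 : x ^ 3 + x ^ 4 + 1 ≤ 3 * (x ^ 4 + 1) := by
    nlinarith [sq_nonneg (x ^ 2 - x), sq_nonneg (x ^ 2 - 1)]
  have h4 := mul_le_mul_of_nonneg_left hx3 hm0.le
  have e1 : -c - β * x + γ / x ^ 2 + δ * x ^ 2
      = (δ * x ^ 4 - β * x ^ 3 - c * x ^ 2 + γ) / x ^ 2 := by
    field_simp; ring
  have e2 : m / 3 * (x + x ^ 2 + 1 / x ^ 2) = (m / 3 * (x ^ 3 + x ^ 4 + 1)) / x ^ 2 := by
    field_simp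
  rw [ge_iff_le, e1, e2]
  gcongr
  linarith

/-- The sharp bound for case (iv), with equality at `x = 1`, `2c = 4δ - 3β`. -/
lemma quartic_bound (δ β c x : ℝ) (hδ : 0 < δ) (hβ : 0 < β) (hk : 0 < 4 * δ - β)
    (hc : 0 ≤ c) (hx : 0 < x) :
    0 ≤ (4 * δ * c + β ^ 2) * (c + β)
      + (4 * δ - β) ^ 2 * (δ * x ^ 4 - β * x ^ 3 - c * x ^ 2) := by
  rcases le_or_gt (β * (x + 1) ^ 2) (8 * δ * x ^ 2) with hD | hD
  · have e : 16 * δ * ((4 * δ * c + β ^ 2) * (c + β)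
        + (4 * δ - β) ^ 2 * (δ * x ^ 4 - β * x ^ 3 - c * x ^ 2))
        = (8 * δ * c + (4 * δ * β + β ^ 2 - (4 * δ - β) ^ 2 * x ^ 2)) ^ 2
          + (4 * δ - β) ^ 2 * β * (x - 1) ^ 2 * (8 * δ * x ^ 2 - β * (x + 1) ^ 2) := by
      ring
    have hD' := sub_nonneg.mpr hD
    refine nonneg_of_mul_nonneg_right (?_ : 0 ≤ 16 * δ * _) (by positivity)
    rw [e]
    positivity
  · have hB : 0 ≤ 4 * δ * β + β ^ 2 - (4 * δ - β) ^ 2 * x ^ 2 := by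
      -- `(x + 1)² ≤ 2 (x² + 1)` turns the case hypothesis into a bound on `x²`.
      have h1 : (4 * δ - β) * x ^ 2 ≤ β := by
        nlinarith [mul_nonneg hβ.le (sq_nonneg (x - 1))]
      have h2 := mul_le_mul_of_nonneg_left h1 hk.le
      nlinarith [sq_nonneg β]
    have h0 : 0 ≤ β ^ 3 + (4 * δ - β) ^ 2 * (δ * x ^ 4 - β * x ^ 3) := by
      -- `δx⁴ - βx³` is minimal at `x = 3β / (4δ)`.
      have h1 : -(27 * β ^ 4) ≤ 256 * δ ^ 3 * (δ * x ^ 4 - β * x ^ 3) := by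
        have e : 256 * δ ^ 3 * (δ * x ^ 4 - β * x ^ 3) + 27 * β ^ 4
            = (4 * δ * x - 3 * β) ^ 2 * ((4 * δ * x + β) ^ 2 + 2 * β ^ 2) := by ring
        have : 0 ≤ (4 * δ * x - 3 * β) ^ 2 * ((4 * δ * x + β) ^ 2 + 2 * β ^ 2) := by positivity
        linarith
      -- `β (4δ - β)²` is maximal on `[0, 4δ]` at `β = 4δ / 3`.
      have h2 : 27 * (β * (4 * δ - β) ^ 2) ≤ 256 * δ ^ 3 := by
        have e : 256 * δ ^ 3 - 27 * (β * (4 * δ - β) ^ 2)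
            = (4 * δ - 3 * β) ^ 2 * (4 * (4 * δ - β) + β) := by ring
        have : 0 ≤ (4 * δ - 3 * β) ^ 2 * (4 * (4 * δ - β) + β) := by positivity
        linarith
      have h3 := mul_le_mul_of_nonneg_left h1 (sq_nonneg (4 * δ - β))
      have h4 := mul_le_mul_of_nonneg_left h2 (by positivity : 0 ≤ β ^ 3)
      refine nonneg_of_mul_nonneg_right (?_ : 0 ≤ 256 * δ ^ 3 * _) (by positivity)
      linarith
    have h5 := mul_nonneg hc hB
    have h6 : 0 ≤ 4 * δ * c ^ 2 := by positivity
    linarith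

theorem stmt_10 (γ δ β α cs : ℝ) (hγ : 0 < γ) (hδ : 0 < δ)
    (hcond :
      (β < 0 ∧ cs - α < 0) ∨
      (β < 0 ∧ 0 < cs - α ∧ cs - α < 2 * Real.sqrt (γ * δ)) ∨
      (0 < β ∧ cs - α ≤ -(β ^ 2) / (4 * δ)) ∨
      (0 < β ∧ 0 < 4 * δ - β ∧ β ^ 3 < γ * (4 * δ - β) ^ 2 ∧ 0 < cs - α ∧
        cs - α < (1 / 2) * (-(β * (1 + β / (4 * δ)))
          + (4 * δ - β) * Real.sqrt (γ / δ + (β / (4 * δ)) ^ 2)))) :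
    ∃ c₀ : ℝ, 0 < c₀ ∧ ∀ ξ : ℝ, ξ ≠ 0 →
      -(cs - α) - β * |ξ| + γ / ξ ^ 2 + δ * ξ ^ 2
        ≥ c₀ * (|ξ| + ξ ^ 2 + 1 / ξ ^ 2) := by
  generalize cs - α = c at hcond ⊢
  rcases hcond with ⟨hβ, hc⟩ | ⟨hβ, hc, hlt⟩ | ⟨hβ, hc⟩ | ⟨hβ, hk, -, hc, hlt⟩
  · refine coercive_of_quartic γ δ β c γ hγ hδ hγ fun x hx => ?_
    have h1 : 0 ≤ δ * x ^ 4 := by positivity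
    have h2 : 0 ≤ -β * x ^ 3 := mul_nonneg (by linarith) (by positivity)
    have h3 : 0 ≤ -c * x ^ 2 := mul_nonneg (by linarith) (by positivity)
    linarith
  · have hs := Real.sq_sqrt (by positivity : 0 ≤ γ * δ)
    have hcc : c ^ 2 < 4 * (γ * δ) := by nlinarith [Real.sqrt_nonneg (γ * δ)]
    refine coercive_of_quartic γ δ β c (γ - c ^ 2 / (4 * δ)) hγ hδ ?_ fun x hx => ?_
    · rw [sub_pos, div_lt_iff₀ (by positivity)]
      linarith
    · have h2 : 0 ≤ -β * x ^ 3 := mul_nonneg (by linarith) (by positivity)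
      have e : δ * x ^ 4 - c * x ^ 2 + c ^ 2 / (4 * δ) = (2 * δ * x ^ 2 - c) ^ 2 / (4 * δ) := by
        field_simp; ring
      have : 0 ≤ (2 * δ * x ^ 2 - c) ^ 2 / (4 * δ) := by positivity
      linarith
  · refine coercive_of_quartic γ δ β c γ hγ hδ hγ fun x hx => ?_
    have e : δ * x ^ 2 - β * x - -(β ^ 2) / (4 * δ) = (2 * δ * x - β) ^ 2 / (4 * δ) := by
      field_simp; ring
    have h1 : 0 ≤ (2 * δ * x - β) ^ 2 / (4 * δ) := by positivity
    have h2 : 0 ≤ x ^ 2 * (δ * x ^ 2 - β * x - c) := mul_nonneg (by positivity) (by linarith)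
    linarith
  · have hs := Real.sq_sqrt (by positivity : 0 ≤ γ / δ + (β / (4 * δ)) ^ 2)
    generalize √(γ / δ + (β / (4 * δ)) ^ 2) = s at hs hlt
    -- Squaring `2c + β(1 + β/(4δ)) < (4δ - β) s` gives the quadratic inequality in `c`.
    have hkey : (4 * δ * c + β ^ 2) * (c + β) < γ * (4 * δ - β) ^ 2 := by
      have hl : 2 * c + β * (1 + β / (4 * δ)) < (4 * δ - β) * s := by linarith
      have hsq := pow_lt_pow_left₀ hl (by positivity) two_ne_zero
      rw [mul_pow, hs] at hsq
      have e : (4 * δ - β) ^ 2 * (γ / δ + (β / (4 * δ)) ^ 2)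
          - (2 * c + β * (1 + β / (4 * δ))) ^ 2
          = (γ * (4 * δ - β) ^ 2 - (4 * δ * c + β ^ 2) * (c + β)) / δ := by
        field_simp; ring
      have hpos := sub_pos.mpr hsq
      rw [e] at hpos
      have := (div_pos_iff_of_pos_right hδ).mp hpos
      linarith
    have hk2 : 0 < (4 * δ - β) ^ 2 := by positivity
    refine coercive_of_quartic γ δ β c
      (γ - (4 * δ * c + β ^ 2) * (c + β) / (4 * δ - β) ^ 2) hγ hδ ?_ fun x hx => ?_
    · rw [sub_pos, div_lt_iff₀ hk2]
      exact hkey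
    · have hb := quartic_bound δ β c x hδ hβ hk hc.le hx
      have : -(δ * x ^ 4 - β * x ^ 3 - c * x ^ 2)
          ≤ (4 * δ * c + β ^ 2) * (c + β) / (4 * δ - β) ^ 2 := by
        rw [le_div_iff₀ hk2]
        linarith
      linarith
end

section
/- Let γ > 0, δ > 0, β > 0 with 4δ − β > 0 and β³ < γ(4δ − β)², and let 0 < c < z₊, where z₊ = ½·(−β(1 + β/(4δ)) + (4δ − β)·√(γ/δ + (β/(4δ))²)). Set X₊ = ½·(−c/β + √((c/β)² + 4γ/β)). Then (β + c)/(4δ − β) < X₊, and for every ε > 0 with (β + c)/(4δ − β) < ε² < X₊, both γ − ε²(c + βε²) > 0 and δ − β/(4ε²) − (c + βε²)/(4ε²) > 0. -/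
open Real

/-!
Both thresholds are positive roots of quadratics, so each hypothesis `x < root` is
equivalent, for `0 ≤ x`, to negativity of the quadratic at `x`. For `X₊` the quadratic is
`β X² + c X - γ`, which is the negative of the first coefficient at `X = ε²`. Substituting
`X = (β + c) / (4δ - β)` and clearing denominators gives
`(β + c) (β² + 4 δ c) < γ (4δ - β)²`, and this quadratic inequality in `c` is exactly `c < z₊`.
The second coefficient is `((4δ - β) ε² - (β + c)) / (4 ε²)`.
-/

/-- The bound `x < X₊`, with `X₊` the positive root of `β X² + c X - γ`, in polynomial form. -/
lemma lt_posRoot_iff {β c γ x : ℝ} (hβ : 0 < β) (hc : 0 < c) (hx : 0 ≤ x) :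
    x < (1 / 2) * (-(c / β) + Real.sqrt ((c / β) ^ 2 + 4 * γ / β)) ↔
      x * (c + β * x) < γ := by
  have hp : 0 < c / β := div_pos hc hβ
  have h1 : x < (1 / 2) * (-(c / β) + Real.sqrt ((c / β) ^ 2 + 4 * γ / β)) ↔
      2 * x + c / β < Real.sqrt ((c / β) ^ 2 + 4 * γ / β) := by
    constructor <;> intro h <;> linarith
  have h2 : (c / β) ^ 2 + 4 * γ / β - (2 * x + c / β) ^ 2
      = 4 / β * (γ - x * (c + β * x)) := by
    field_simp
    ring
  rw [h1, Real.lt_sqrt (by positivity), ← sub_pos, h2,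
    mul_pos_iff_of_pos_left (by positivity), sub_pos]

/-- The bound `c < z₊` in polynomial form: squaring it completes the square in `c`. -/
lemma quadratic_of_lt_zPlus {γ δ β c : ℝ} (hγ : 0 < γ) (hδ : 0 < δ) (hβ : 0 < β)
    (hc : 0 < c)
    (hc' : c < (1 / 2) * (-(β * (1 + β / (4 * δ)))
      + (4 * δ - β) * Real.sqrt (γ / δ + (β / (4 * δ)) ^ 2))) :
    (β + c) * (β ^ 2 + 4 * δ * c) < γ * (4 * δ - β) ^ 2 := by
  have h1 : 2 * c + β * (1 + β / (4 * δ))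
      < (4 * δ - β) * Real.sqrt (γ / δ + (β / (4 * δ)) ^ 2) := by linarith
  have h2 := pow_lt_pow_left₀ h1 (by positivity) two_ne_zero
  rw [mul_pow, Real.sq_sqrt (by positivity), ← sub_pos] at h2
  have h3 : (4 * δ - β) ^ 2 * (γ / δ + (β / (4 * δ)) ^ 2) - (2 * c + β * (1 + β / (4 * δ))) ^ 2
      = 1 / δ * (γ * (4 * δ - β) ^ 2 - (β + c) * (β ^ 2 + 4 * δ * c)) := by
    field_simp
    ring
  rw [h3, mul_pos_iff_of_pos_left (by positivity), sub_pos] at h2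
  exact h2

/-- Let `γ, δ, β > 0` with `4δ − β > 0` and `β³ < γ(4δ − β)²`,
and let `0 < c < z₊` where
`z₊ = ½(−β(1 + β/(4δ)) + (4δ − β)√(γ/δ + (β/(4δ))²))`.  Set
`X₊ = ½(−c/β + √((c/β)² + 4γ/β))`.  Then `(β + c)/(4δ − β) < X₊`, and for every
`ε > 0` with `(β + c)/(4δ − β) < ε² < X₊`, both `γ − ε²(c + βε²) > 0` and
`δ − β/(4ε²) − (c + βε²)/(4ε²) > 0`. -/
theorem stmt_13 (γ δ β c : ℝ) (hγ : 0 < γ) (hδ : 0 < δ) (hβ : 0 < β)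
    (hA : 0 < 4 * δ - β) (hB : β ^ 3 < γ * (4 * δ - β) ^ 2)
    (hc : 0 < c)
    (hc' : c < (1 / 2) * (-(β * (1 + β / (4 * δ)))
      + (4 * δ - β) * Real.sqrt (γ / δ + (β / (4 * δ)) ^ 2))) :
    (β + c) / (4 * δ - β)
        < (1 / 2) * (-(c / β) + Real.sqrt ((c / β) ^ 2 + 4 * γ / β)) ∧
    ∀ ε : ℝ, 0 < ε →
      (β + c) / (4 * δ - β) < ε ^ 2 →
      ε ^ 2 < (1 / 2) * (-(c / β) + Real.sqrt ((c / β) ^ 2 + 4 * γ / β)) →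
      0 < γ - ε ^ 2 * (c + β * ε ^ 2) ∧
      0 < δ - β / (4 * ε ^ 2) - (c + β * ε ^ 2) / (4 * ε ^ 2) := by
  constructor
  · rw [lt_posRoot_iff hβ hc (by positivity)]
    have hq := quadratic_of_lt_zPlus hγ hδ hβ hc hc'
    have h : (β + c) / (4 * δ - β) * (c + β * ((β + c) / (4 * δ - β)))
        = (β + c) * (β ^ 2 + 4 * δ * c) / (4 * δ - β) ^ 2 := by
      field_simp
      ring
    rw [h, div_lt_iff₀ (by positivity)]
    exact hq
  · intro ε hε hlo hhi
    rw [lt_posRoot_iff hβ hc (by positivity)] at hhi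
    rw [div_lt_iff₀ hA] at hlo
    refine ⟨sub_pos.mpr hhi, ?_⟩
    have h : δ - β / (4 * ε ^ 2) - (c + β * ε ^ 2) / (4 * ε ^ 2)
        = (ε ^ 2 * (4 * δ - β) - (β + c)) / (4 * ε ^ 2) := by
      field_simp
      ring
    rw [h]
    exact div_pos (sub_pos.mpr hlo) (by positivity)
end
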